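/- arXiv:2007.06543 — 3 statements merged into one kernel-verified Lean document; each statement's English description precedes it below -/
import Mathlib

section
/- Let V0, V1, V2 be real numbers and let V̂ be the 3×3 real matrix with V̂_{mm} = 2*V_m and V̂_{mn} = -V_n for m ≠ n. Then the characteristic polynomial of V̂ equals λ · (λ² - 2(V0 + V1 + V2)λ + 3V), where V := V1*V2 + V0*V2 + V0*V1. In particular det V̂ = 0 and trace V̂ = 2(V0 + V1 + V2). -/
/-- The directing matrix of a ternary statistical experiment:
`V̂_{mm} = 2 V_m`, `V̂_{mn} = -V_n` for `m ≠ n`. -/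
def dirMatrix (V0 V1 V2 : ℝ) : Matrix (Fin 3) (Fin 3) ℝ :=
  !![2*V0, -V1, -V2;
     -V0, 2*V1, -V2;
     -V0, -V1, 2*V2]

/-- The equilibrium vector `ρ = (V1V2/V, V0V2/V, V0V1/V)` with
`V = V1V2 + V0V2 + V0V1`. -/
noncomputable def equil (V0 V1 V2 : ℝ) : Fin 3 → ℝ :=
  ![V1*V2 / (V1*V2 + V0*V2 + V0*V1),
    V0*V2 / (V1*V2 + V0*V2 + V0*V1),
    V0*V1 / (V1*V2 + V0*V2 + V0*V1)]

/-!
For `N` states `V̂ = (N - J) * diagonal V`, where `J` is the all-ones matrix. The principal minor of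
`V̂` on a set `s` of `k` states is therefore `det (N - J_k) * ∏ i ∈ s, V i`, where `J_k` is the
all-ones matrix of size `k`, and `det (N - J_k) = N ^ k - k * N ^ (k - 1)` is the value at `N` of
the characteristic polynomial of the rank-one matrix `J_k`. Up to sign, the coefficients of the
characteristic polynomial of `V̂` are the sums of its principal minors of each size; the constant
one vanishes because the factor `N ^ k - k * N ^ (k - 1)` is zero for `k = N`.
-/

section

open Finset Matrix Polynomial

variable {n R : Type*} [Fintype n] [DecidableEq n] [CommRing R]

theorem det_scalar_sub_vecMulVec (c : R) (u w : n → R) :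
    (scalar n c - vecMulVec u w).det =
      c ^ Fintype.card n - (u ⬝ᵥ w) * c ^ (Fintype.card n - 1) := by
  have h := congrArg (eval c) (charpoly_vecMulVec u w)
  rw [eval_charpoly] at h
  simpa using h

/-- The directing matrix of a statistical experiment with states indexed by `n` and directing
parameters `v`. The diagonal factor is one less than the number of states, so that `dirMatrix` is
the case of three states. -/
def directingMatrix (v : n → R) : Matrix n n R :=
  of fun i j => if i = j then (Fintype.card n - 1) * v j else -v j

theorem submatrix_directingMatrix {m : Type*} [Fintype m] [DecidableEq m] (v : n → R)
    {f : m → n} (hf : Function.Injective f) :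
    (directingMatrix v).submatrix f f =
      (scalar m (Fintype.card n : R) - vecMulVec 1 1) * diagonal (v ∘ f) := by
  ext i j
  rw [submatrix_apply, mul_diagonal, Matrix.sub_apply, scalar_apply, diagonal_apply,
    vecMulVec_apply]
  by_cases hij : i = j <;> simp [directingMatrix, hf.eq_iff, hij]

theorem det_submatrix_directingMatrix {m : Type*} [Fintype m] [DecidableEq m] (v : n → R)
    {f : m → n} (hf : Function.Injective f) :
    ((directingMatrix v).submatrix f f).det =
      (Fintype.card n ^ Fintype.card m - Fintype.card m * Fintype.card n ^ (Fintype.card m - 1)) *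
        ∏ i, v (f i) := by
  rw [submatrix_directingMatrix v hf, det_mul, det_scalar_sub_vecMulVec, det_diagonal]
  simp

theorem det_directingMatrix [Nonempty n] (v : n → R) : (directingMatrix v).det = 0 := by
  simpa [mul_pow_sub_one Fintype.card_ne_zero] using
    det_submatrix_directingMatrix v Function.injective_id

theorem trace_directingMatrix (v : n → R) :
    (directingMatrix v).trace = (Fintype.card n - 1) * ∑ i, v i := by
  simp [trace, directingMatrix, mul_sum]

theorem coeff_charpoly_directingMatrix (v : n → R) {k : ℕ} (hk : k ≤ Fintype.card n) :
    (directingMatrix v).charpoly.coeff (Fintype.card n - k) =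
      (-1) ^ k * (Fintype.card n ^ k - k * Fintype.card n ^ (k - 1)) *
        ∑ s ∈ powersetCard k univ, ∏ i ∈ s, v i := by
  rw [charpoly_coeff_eq_sum_minors _ _ hk, mul_assoc]
  congr 1
  rw [mul_sum]
  refine sum_congr rfl fun s hs => ?_
  rw [det_submatrix_directingMatrix v Subtype.val_injective, Fintype.card_coe,
    (mem_powersetCard.mp hs).2, prod_coe_sort s v]

theorem charpoly_dirMatrix_general [Nonempty n] (v : n → R) :
    (directingMatrix v).charpoly =
      X * ∑ k ∈ range (Fintype.card n),
        C ((-1) ^ k * (Fintype.card n ^ k - k * Fintype.card n ^ (k - 1)) *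
          ∑ s ∈ powersetCard k univ, ∏ i ∈ s, v i) * X ^ (Fintype.card n - 1 - k) ∧
    (directingMatrix v).det = 0 ∧
    (directingMatrix v).trace = (Fintype.card n - 1) * ∑ i, v i := by
  refine ⟨?_, det_directingMatrix v, trace_directingMatrix v⟩
  nontriviality R
  have hdeg : (directingMatrix v).charpoly.natDegree < Fintype.card n + 1 := by
    rw [charpoly_natDegree_eq_dim]
    exact Nat.lt_succ_self _
  have hzero : (directingMatrix v).charpoly.coeff 0 = 0 := by
    simp [coeff_zero_eq_eval_zero, eval_charpoly, det_neg, det_directingMatrix]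
  conv_lhs => rw [as_sum_range_C_mul_X_pow' _ hdeg]
  rw [sum_range_succ', hzero, ← sum_range_reflect, mul_sum]
  simp only [C_0, zero_mul, add_zero]
  refine sum_congr rfl fun k hk => ?_
  have hindex : Fintype.card n - k = Fintype.card n - 1 - k + 1 := by grind
  rw [← coeff_charpoly_directingMatrix v (mem_range.mp hk).le, hindex]
  ring

theorem sum_powersetCard_two_fin_three (v : Fin 3 → R) :
    ∑ s ∈ powersetCard 2 univ, ∏ i ∈ s, v i = v 1 * v 2 + v 0 * v 2 + v 0 * v 1 := by
  have h : powersetCard 2 (univ : Finset (Fin 3)) = {{1, 2}, {0, 2}, {0, 1}} := by decide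
  rw [h, sum_insert (by decide), sum_pair (by decide)]
  simp [add_assoc]

theorem sum_charpoly_coeff_fin_three (v : Fin 3 → R) :
    ∑ k ∈ range (Fintype.card (Fin 3)),
        C ((-1) ^ k * (Fintype.card (Fin 3) ^ k - k * Fintype.card (Fin 3) ^ (k - 1)) *
          ∑ s ∈ powersetCard k univ, ∏ i ∈ s, v i) * X ^ (Fintype.card (Fin 3) - 1 - k) =
      X ^ 2 - C (2 * (v 0 + v 1 + v 2)) * X + C (3 * (v 1 * v 2 + v 0 * v 2 + v 0 * v 1)) := by
  simp only [Fintype.card_fin, sum_range_succ, range_zero, sum_empty, powersetCard_zero,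
    powersetCard_one, sum_powersetCard_two_fin_three, sum_singleton, sum_map, prod_empty,
    prod_singleton, Function.Embedding.coeFn_mk, Fin.sum_univ_three]
  simp only [map_mul, map_add, map_sub, map_pow, map_neg, map_one, map_natCast, map_ofNat C]
  push_cast
  ring

theorem dirMatrix_eq_directingMatrix (V0 V1 V2 : ℝ) :
    dirMatrix V0 V1 V2 = directingMatrix (n := Fin 3) ![V0, V1, V2] := by
  ext i j
  fin_cases i <;> fin_cases j <;> norm_num [dirMatrix, directingMatrix]

end

open Polynomial in
theorem charpoly_dirMatrix (V0 V1 V2 : ℝ) :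
    (dirMatrix V0 V1 V2).charpoly =
      X * (X ^ 2 - C (2 * (V0 + V1 + V2)) * X
        + C (3 * (V1*V2 + V0*V2 + V0*V1))) ∧
    (dirMatrix V0 V1 V2).det = 0 ∧
    (dirMatrix V0 V1 V2).trace = 2 * (V0 + V1 + V2) := by
  rw [dirMatrix_eq_directingMatrix]
  convert! charpoly_dirMatrix_general (n := Fin 3) ![V0, V1, V2] using 3
  · exact (sum_charpoly_coeff_fin_three ![V0, V1, V2]).symm
  · simp only [Fintype.card_fin, Fin.sum_univ_three, Matrix.cons_val]
    push_cast
    ring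
end

section
/- Let V0, V1, V2 be strictly negative real numbers, let V̂ be the 3×3 real matrix with V̂_{mm} = 2*V_m and V̂_{mn} = -V_n for m ≠ n, set V := V1*V2 + V0*V2 + V0*V1 and ρ := (V1*V2/V, V0*V2/V, V0*V1/V). Then there exists ε₀ > 0 such that for every step size ε with 0 < ε ≤ ε₀ and every sequence P : ℕ → ℝ³ satisfying P(k+1) - P(k) = -ε V̂ P(k) for all k ≥ 0, the balance condition P_0(0) + P_1(0) + P_2(0) = 1, and P(0) ≠ ρ, the sequence P(k) does NOT converge to ρ; in fact ‖P(k) - ρ‖ → ∞ as k → ∞ (repulsive equilibrium). -/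
/-!
The deviation `x = P - ρ` satisfies the same difference equation as `P` and stays in the plane
`∑ i, x i = 0`. On this plane `V̂` is three times the compression of `diag (V0, V1, V2)`, hence
symmetric, with trace `2 (V0 + V1 + V2)` and determinant `3 (V1 V2 + V0 V2 + V0 V1)`. Negative trace
and positive determinant make it negative definite, so each step `x ↦ x - ε V̂ x` expands the
Euclidean norm by at least a fixed factor greater than `1`, for every step size `ε > 0`.
-/

open Filter Matrix
open scoped RealInnerProductSpace

section Expansion

variable {E : Type*} [SeminormedAddCommGroup E] [InnerProductSpace ℝ E]

theorem one_add_mul_norm_le_norm_of_le_inner_sub {x y : E} {c : ℝ}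
    (h : c * ‖x‖ ^ 2 ≤ ⟪x, y - x⟫) : (1 + c) * ‖x‖ ≤ ‖y‖ := by
  rcases (norm_nonneg x).eq_or_lt with hx | hx
  · simp [← hx]
  · refine le_of_mul_le_mul_left ?_ hx
    calc ‖x‖ * ((1 + c) * ‖x‖) = ‖x‖ ^ 2 + c * ‖x‖ ^ 2 := by ring
      _ ≤ ⟪x, x⟫ + ⟪x, y - x⟫ := by rw [real_inner_self_eq_norm_sq]; gcongr
      _ = ⟪x, y⟫ := by rw [← inner_add_right, add_sub_cancel]
      _ ≤ ‖x‖ * ‖y‖ := real_inner_le_norm x y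

theorem tendsto_norm_atTop_of_le_inner_sub {x : ℕ → E} {c : ℝ} (hc : 0 < c) (hx : 0 < ‖x 0‖)
    (h : ∀ k, c * ‖x k‖ ^ 2 ≤ ⟪x k, x (k + 1) - x k⟫) :
    Tendsto (fun k => ‖x k‖) atTop atTop :=
  tendsto_atTop_of_geom_le hx (lt_add_of_pos_right 1 hc) fun k =>
    one_add_mul_norm_le_norm_of_le_inner_sub (h k)

theorem tendsto_norm_atTop_of_le_dotProduct_sub {ι : Type*} [Fintype ι] {x : ℕ → ι → ℝ} {c : ℝ}
    (hc : 0 < c) (hx : x 0 ≠ 0) (h : ∀ k, c * (x k ⬝ᵥ x k) ≤ x k ⬝ᵥ (x (k + 1) - x k)) :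
    Tendsto (fun k => ‖x k‖) atTop atTop := by
  have euclidean : Tendsto (fun k => ‖WithLp.toLp 2 (x k)‖) atTop atTop := by
    refine tendsto_norm_atTop_of_le_inner_sub hc ?_ fun k => ?_
    · simpa using hx
    · rw [← real_inner_self_eq_norm_sq, ← WithLp.toLp_sub, EuclideanSpace.inner_toLp_toLp,
        EuclideanSpace.inner_toLp_toLp, star_trivial, dotProduct_comm (x (k + 1) - x k)]
      exact h k
  rw [tendsto_norm_atTop_iff_cobounded] at euclidean ⊢
  exact (PiLp.antilipschitzWith_ofLp 2 fun _ : ι => ℝ).tendsto_cobounded.comp euclidean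

end Expansion

section DirectingMatrix

variable (V0 V1 V2 : ℝ)

theorem sum_dirMatrix_mulVec (x : Fin 3 → ℝ) : ∑ i, (dirMatrix V0 V1 V2 *ᵥ x) i = 0 := by
  simp only [dirMatrix, mulVec, dotProduct, Fin.sum_univ_three, of_apply, cons_val]
  ring

theorem dirMatrix_mulVec_equil : dirMatrix V0 V1 V2 *ᵥ equil V0 V1 V2 = 0 := by
  ext i
  simp only [dirMatrix, equil, mulVec, dotProduct, Fin.sum_univ_three, of_apply, cons_val,
    Pi.zero_apply]
  fin_cases i <;> simp only [Fin.zero_eta, Fin.mk_one, Fin.reduceFinMk, cons_val] <;> ring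

variable {V0 V1 V2}

theorem sum_equil (hV : V1 * V2 + V0 * V2 + V0 * V1 ≠ 0) : ∑ i, equil V0 V1 V2 i = 1 := by
  simp only [equil, Fin.sum_univ_three, cons_val]
  rw [← add_div, ← add_div, div_self hV]

-- Cayley–Hamilton for the symmetric restriction of `V̂` to the plane, paired with `x`.
theorem dotProduct_self_dirMatrix_mulVec {x : Fin 3 → ℝ} (hx : ∑ i, x i = 0) :
    (dirMatrix V0 V1 V2 *ᵥ x) ⬝ᵥ (dirMatrix V0 V1 V2 *ᵥ x) =
      2 * (V0 + V1 + V2) * (x ⬝ᵥ dirMatrix V0 V1 V2 *ᵥ x) -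
        3 * (V1 * V2 + V0 * V2 + V0 * V1) * (x ⬝ᵥ x) := by
  rw [Fin.sum_univ_three] at hx
  have hx2 : x 2 = -x 0 - x 1 := by linarith
  simp only [dirMatrix, mulVec, dotProduct, Fin.sum_univ_three, of_apply, cons_val, hx2]
  ring

theorem dotProduct_dirMatrix_mulVec_le (hS : V0 + V1 + V2 < 0) {x : Fin 3 → ℝ}
    (hx : ∑ i, x i = 0) :
    x ⬝ᵥ dirMatrix V0 V1 V2 *ᵥ x ≤
      3 * (V1 * V2 + V0 * V2 + V0 * V1) / (2 * (V0 + V1 + V2)) * (x ⬝ᵥ x) := by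
  have hnonneg := dotProduct_self_star_nonneg (dirMatrix V0 V1 V2 *ᵥ x)
  rw [star_trivial, dotProduct_self_dirMatrix_mulVec hx] at hnonneg
  rw [div_mul_eq_mul_div, le_div_iff_of_neg (by linarith)]
  linarith

variable {ε : ℝ}

theorem sum_eq_sum_zero_of_dirMatrix_step {P : ℕ → Fin 3 → ℝ}
    (hP : ∀ k, P (k + 1) - P k = -(ε • dirMatrix V0 V1 V2 *ᵥ P k)) (k : ℕ) :
    ∑ i, P k i = ∑ i, P 0 i := by
  induction k with
  | zero => rfl
  | succ k ih =>
    rw [← ih, ← sub_eq_zero, ← Finset.sum_sub_distrib]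
    simp only [← Pi.sub_apply, hP, Pi.neg_apply, Pi.smul_apply, smul_eq_mul,
      Finset.sum_neg_distrib, ← Finset.mul_sum, sum_dirMatrix_mulVec, mul_zero, neg_zero]

theorem tendsto_norm_atTop_of_dirMatrix_step (hS : V0 + V1 + V2 < 0)
    (hV : 0 < V1 * V2 + V0 * V2 + V0 * V1) (hε : 0 < ε) {x : ℕ → Fin 3 → ℝ}
    (hx : ∀ k, x (k + 1) - x k = -(ε • dirMatrix V0 V1 V2 *ᵥ x k))
    (hsum : ∑ i, x 0 i = 0) (hne : x 0 ≠ 0) :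
    Tendsto (fun k => ‖x k‖) atTop atTop := by
  set μ := 3 * (V1 * V2 + V0 * V2 + V0 * V1) / (2 * (V0 + V1 + V2))
  have hμ_neg : μ < 0 := div_neg_of_pos_of_neg (by positivity) (by linarith)
  refine tendsto_norm_atTop_of_le_dotProduct_sub (c := -(ε * μ))
    (neg_pos.2 (mul_neg_of_pos_of_neg hε hμ_neg)) hne fun k => ?_
  have hform : x k ⬝ᵥ dirMatrix V0 V1 V2 *ᵥ x k ≤ μ * (x k ⬝ᵥ x k) :=
    dotProduct_dirMatrix_mulVec_le hS ((sum_eq_sum_zero_of_dirMatrix_step hx k).trans hsum)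
  rw [hx, dotProduct_neg, dotProduct_smul, smul_eq_mul, neg_mul, mul_assoc]
  gcongr

end DirectingMatrix

theorem repulsive_equilibrium_general {V0 V1 V2 : ℝ} (hS : V0 + V1 + V2 < 0)
    (hV : 0 < V1 * V2 + V0 * V2 + V0 * V1) {ε : ℝ} (hε : 0 < ε) {P : ℕ → Fin 3 → ℝ}
    (hP : ∀ k, P (k + 1) - P k = -(ε • dirMatrix V0 V1 V2 *ᵥ P k))
    (hsum : P 0 0 + P 0 1 + P 0 2 = 1) (hne : P 0 ≠ equil V0 V1 V2) :
    ¬ Tendsto P atTop (nhds (equil V0 V1 V2)) ∧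
      Tendsto (fun k => ‖P k - equil V0 V1 V2‖) atTop atTop := by
  have hdiverge : Tendsto (fun k => ‖P k - equil V0 V1 V2‖) atTop atTop := by
    refine tendsto_norm_atTop_of_dirMatrix_step hS hV hε (fun k => ?_) ?_ (sub_ne_zero.2 hne)
    · rw [sub_sub_sub_cancel_right, hP, mulVec_sub, dirMatrix_mulVec_equil, sub_zero]
    · simp only [Pi.sub_apply]
      rw [Finset.sum_sub_distrib, sum_equil hV.ne', Fin.sum_univ_three, hsum, sub_self]
  exact ⟨fun h => not_tendsto_nhds_of_tendsto_atTop hdiverge _ (h.sub_const _).norm, hdiverge⟩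

theorem repulsive_equilibrium (V0 V1 V2 : ℝ)
    (h0 : V0 < 0) (h1 : V1 < 0) (h2 : V2 < 0) :
    ∃ ε₀ > (0:ℝ), ∀ ε : ℝ, 0 < ε → ε ≤ ε₀ →
      ∀ P : ℕ → Fin 3 → ℝ,
        (∀ k : ℕ, P (k+1) - P k = -(ε • (dirMatrix V0 V1 V2).mulVec (P k))) →
        P 0 0 + P 0 1 + P 0 2 = 1 →
        P 0 ≠ equil V0 V1 V2 →
        ¬ Filter.Tendsto P Filter.atTop (nhds (equil V0 V1 V2)) ∧
        Filter.Tendsto (fun k => ‖P k - equil V0 V1 V2‖) Filter.atTop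
          Filter.atTop := by
  have hV : 0 < V1 * V2 + V0 * V2 + V0 * V1 := by
    linarith [mul_pos_of_neg_of_neg h1 h2, mul_pos_of_neg_of_neg h0 h2,
      mul_pos_of_neg_of_neg h0 h1]
  exact ⟨1, one_pos, fun ε hε _ P => repulsive_equilibrium_general (by linarith) hV hε⟩
end

section
/- Let V0 and W be real numbers with V1 = V2 = W, V := W² + 2*V0*W ≠ 0, ρ_0 := W²/V, and let V̂ be the 3×3 real matrix with V̂_{mm} = 2*V_m and V̂_{mn} = -V_n for m ≠ n. Let P : ℕ → ℝ³ satisfy P(k+1) - P(k) = -V̂ P(k) for all k ≥ 0 and P_0(0) + P_1(0) + P_2(0) = 1. If 0 < 2*V0 + W < 2, then lim_{k→∞} P_0(k) = ρ_0; if instead |1 - 2*V0 - W| > 1 and P_0(0) ≠ ρ_0, then |P_0(k) - ρ_0| → ∞ as k → ∞, so P_0(k) does not converge to ρ_0. -/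
open Filter Matrix Topology

section GeometricDeviation

variable {𝕜 E : Type*} [NormedField 𝕜] [NormedAddCommGroup E] [NormedSpace 𝕜 E]
  {x : ℕ → E} {a c : E} {q : 𝕜}

lemma tendsto_nhds_of_sub_eq_pow_smul (hq : ‖q‖ < 1) (hx : ∀ k, x k - a = q ^ k • c) :
    Tendsto x atTop (𝓝 a) := by
  rw [← tendsto_sub_nhds_zero_iff]
  simpa only [hx, zero_smul] using (tendsto_pow_atTop_nhds_zero_of_norm_lt_one hq).smul_const c

lemma tendsto_norm_sub_atTop_of_sub_eq_pow_smul (hq : 1 < ‖q‖) (hc : c ≠ 0)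
    (hx : ∀ k, x k - a = q ^ k • c) : Tendsto (fun k => ‖x k - a‖) atTop atTop := by
  simpa only [hx, norm_smul, norm_pow] using
    (tendsto_pow_atTop_atTop_of_one_lt hq).atTop_mul_const (norm_pos_iff.mpr hc)

end GeometricDeviation

/-- `P` solves the difference equation `ΔP(k+1) = -A P(k)` of a statistical experiment whose
directing matrix is `A`; the increment `ΔP(k+1)` is `P(k+1) - P(k)`. -/
def IsTrajectory {R n : Type*} [Ring R] [Fintype n] (A : Matrix n n R) (P : ℕ → n → R) : Prop :=
  ∀ k, P (k + 1) - P k = -(A *ᵥ P k)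

namespace IsTrajectory

variable {R n : Type*} [CommRing R] [Fintype n] {A : Matrix n n R} {P : ℕ → n → R}

lemma dotProduct_eq_pow_mul (hP : IsTrajectory A P) {w : n → R} {μ : R}
    (hw : w ᵥ* A = μ • w) (k : ℕ) : w ⬝ᵥ P k = (1 - μ) ^ k * (w ⬝ᵥ P 0) := by
  induction k with
  | zero => rw [pow_zero, one_mul]
  | succ k ih =>
    calc w ⬝ᵥ P (k + 1) = w ⬝ᵥ (P k - A *ᵥ P k) := by
          rw [sub_eq_iff_eq_add'.mp (hP k), sub_eq_add_neg]
      _ = w ⬝ᵥ P k - (w ᵥ* A) ⬝ᵥ P k := by rw [dotProduct_sub, dotProduct_mulVec]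
      _ = (1 - μ) * (w ⬝ᵥ P k) := by rw [hw, smul_dotProduct, smul_eq_mul, one_sub_mul]
      _ = (1 - μ) ^ (k + 1) * (w ⬝ᵥ P 0) := by rw [ih, pow_succ', mul_assoc]

lemma sum_eq_sum_init (hP : IsTrajectory A P) (hA : 1 ᵥ* A = 0) (k : ℕ) :
    ∑ i, P k i = ∑ i, P 0 i := by
  have h := hP.dotProduct_eq_pow_mul (hA.trans (zero_smul R 1).symm) k
  simpa only [one_dotProduct, sub_zero, one_pow, one_mul] using h

end IsTrajectory

lemma one_vecMul_dirMatrix (V0 V1 V2 : ℝ) : 1 ᵥ* dirMatrix V0 V1 V2 = 0 := by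
  ext j
  fin_cases j <;>
    simp only [dirMatrix, vecMul, dotProduct, Fin.sum_univ_three, of_apply, cons_val, Fin.zero_eta,
      Fin.mk_one, Fin.reduceFinMk, Pi.one_apply, Pi.zero_apply] <;>
    ring

lemma dirMatrix_symm_row_zero_vecMul_dirMatrix (V0 W : ℝ) :
    dirMatrix V0 W W 0 ᵥ* dirMatrix V0 W W = (2 * V0 + W) • dirMatrix V0 W W 0 := by
  ext j
  fin_cases j <;>
    simp only [dirMatrix, vecMul, dotProduct, Fin.sum_univ_three, of_apply, cons_val, Fin.zero_eta,
      Fin.mk_one, Fin.reduceFinMk, Pi.smul_apply, smul_eq_mul] <;>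
    ring

lemma dirMatrix_symm_row_zero_dotProduct_of_sum_eq_one {V0 W : ℝ} (hV : W ^ 2 + 2 * V0 * W ≠ 0)
    {p : Fin 3 → ℝ} (hp : ∑ i, p i = 1) :
    dirMatrix V0 W W 0 ⬝ᵥ p = (2 * V0 + W) * (p 0 - W ^ 2 / (W ^ 2 + 2 * V0 * W)) := by
  have hρ : (2 * V0 + W) * (W ^ 2 / (W ^ 2 + 2 * V0 * W)) = W := by
    rw [← mul_div_assoc, div_eq_iff hV]
    ring
  calc dirMatrix V0 W W 0 ⬝ᵥ p = (2 * V0 + W) * p 0 - W * ∑ i, p i := by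
        simp only [dirMatrix, dotProduct, Fin.sum_univ_three, of_apply, cons_val]
        ring
    _ = (2 * V0 + W) * (p 0 - W ^ 2 / (W ^ 2 + 2 * V0 * W)) := by rw [hp, mul_sub, hρ, mul_one]

lemma IsTrajectory.apply_zero_sub_eq_pow_mul {V0 W : ℝ} (hV : W ^ 2 + 2 * V0 * W ≠ 0)
    {P : ℕ → Fin 3 → ℝ} (hP : IsTrajectory (dirMatrix V0 W W) P) (hP0 : ∑ i, P 0 i = 1) (k : ℕ) :
    P k 0 - W ^ 2 / (W ^ 2 + 2 * V0 * W) =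
      (1 - 2 * V0 - W) ^ k * (P 0 0 - W ^ 2 / (W ^ 2 + 2 * V0 * W)) := by
  have hμ : 2 * V0 + W ≠ 0 := fun h => hV (by linear_combination W * h)
  have hPk : ∑ i, P k i = 1 := (hP.sum_eq_sum_init (one_vecMul_dirMatrix V0 W W) k).trans hP0
  have h := hP.dotProduct_eq_pow_mul (dirMatrix_symm_row_zero_vecMul_dirMatrix V0 W) k
  rw [dirMatrix_symm_row_zero_dotProduct_of_sum_eq_one hV hPk,
    dirMatrix_symm_row_zero_dotProduct_of_sum_eq_one hV hP0, mul_left_comm, ← sub_sub] at h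
  exact mul_left_cancel₀ hμ h

theorem symmetric_case_limit (V0 W : ℝ)
    (hV : W^2 + 2*V0*W ≠ 0) (P : ℕ → Fin 3 → ℝ)
    (hP : ∀ k : ℕ, P (k+1) - P k = -((dirMatrix V0 W W).mulVec (P k)))
    (hinit : P 0 0 + P 0 1 + P 0 2 = 1) :
    (0 < 2*V0 + W → 2*V0 + W < 2 →
      Filter.Tendsto (fun k => P k 0) Filter.atTop
        (nhds (W^2 / (W^2 + 2*V0*W)))) ∧
    (1 < |1 - 2*V0 - W| → P 0 0 ≠ W^2 / (W^2 + 2*V0*W) →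
      Filter.Tendsto (fun k => |P k 0 - W^2 / (W^2 + 2*V0*W)|) Filter.atTop
        Filter.atTop ∧
      ¬ Filter.Tendsto (fun k => P k 0) Filter.atTop
        (nhds (W^2 / (W^2 + 2*V0*W)))) := by
  have hdev (k : ℕ) : P k 0 - W ^ 2 / (W ^ 2 + 2 * V0 * W) =
      (1 - 2 * V0 - W) ^ k • (P 0 0 - W ^ 2 / (W ^ 2 + 2 * V0 * W)) :=
    IsTrajectory.apply_zero_sub_eq_pow_mul hV hP ((Fin.sum_univ_three _).trans hinit) k
  refine ⟨fun hpos hlt => ?_, fun hq hne => ?_⟩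
  · have hq : |1 - 2 * V0 - W| < 1 := abs_lt.mpr ⟨by linarith, by linarith⟩
    exact tendsto_nhds_of_sub_eq_pow_smul hq hdev
  · have hdiv := tendsto_norm_sub_atTop_of_sub_eq_pow_smul hq (sub_ne_zero.mpr hne) hdev
    exact ⟨hdiv, fun hlim => not_tendsto_nhds_of_tendsto_atTop hdiv _ (hlim.sub_const _).norm⟩
end
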